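/- arXiv:1403.6084 — 3 statements merged into one kernel-verified Lean document; each statement's English description precedes it below -/
import Mathlib

section
/- There exists a constant C > 0 such that for all t ≥ 0, ∫_{−π/2}^{π/2} e^{−t cos θ} cos θ dθ ≤ C/(1+t²). -/
/-!
Put `G θ = sin θ * exp (-t cos θ) * (1 + t cos θ) + 2 sin θ`. Then
`G' θ = exp (-t cos θ) * cos θ * (1 + t cos θ + t² sin² θ) + 2 cos θ`.
For `t ≥ 0` and `cos θ ≥ 0` the inequality `x² exp (-x) ≤ 2` at `x = t cos θ` shows that `G' θ` is
at least `(1 + t²)` times the integrand. As `G (π/2) - G (-π/2) = 6`, the bound holds with `C = 6`.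
-/

open Real

/-- There is a constant `C > 0` such that
`∫_{−π/2}^{π/2} e^{−t cos θ} cos θ dθ ≤ C/(1+t²)` for all `t ≥ 0`. -/
theorem statement_3 :
    ∃ C > (0:ℝ), ∀ t : ℝ, 0 ≤ t →
      ∫ θ in (-(π/2))..(π/2), Real.exp (-t * Real.cos θ) * Real.cos θ ≤ C / (1 + t^2) := by
  refine ⟨6, by norm_num, fun t ht => ?_⟩
  have hd : ∀ θ : ℝ, HasDerivAt
      (fun θ => sin θ * exp (-t * cos θ) * (1 + t * cos θ) + 2 * sin θ)
      (exp (-t * cos θ) * cos θ * (1 + t * cos θ + t ^ 2 * sin θ ^ 2) + 2 * cos θ) θ := by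
    intro θ
    have hs := hasDerivAt_sin θ
    have hc := hasDerivAt_cos θ
    have h := ((hs.mul (hc.const_mul (-t)).exp).mul ((hc.const_mul t).const_add 1)).add
      (hs.const_mul 2)
    refine h.congr_deriv ?_
    simp only [Pi.mul_apply]
    ring
  have hG : ∫ θ in (-(π/2))..(π/2),
      (exp (-t * cos θ) * cos θ * (1 + t * cos θ + t ^ 2 * sin θ ^ 2) + 2 * cos θ) = 6 := by
    rw [intervalIntegral.integral_eq_sub_of_hasDerivAt (fun θ _ => hd θ)
      (Continuous.intervalIntegrable (by fun_prop) _ _)]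
    simp
    norm_num
  rw [le_div_iff₀ (by positivity), ← intervalIntegral.integral_mul_const, ← hG]
  refine intervalIntegral.integral_mono_on (by linarith [pi_pos])
    (Continuous.intervalIntegrable (by fun_prop) _ _)
    (Continuous.intervalIntegrable (by fun_prop) _ _) fun θ hθ => ?_
  have hc : 0 ≤ cos θ := cos_nonneg_of_mem_Icc hθ
  have hx : 0 ≤ t * cos θ := mul_nonneg ht hc
  have hkey : exp (-t * cos θ) * (t * cos θ) ^ 2 ≤ 2 := by
    rw [neg_mul, exp_neg, inv_mul_le_iff₀ (exp_pos _)]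
    linarith [quadratic_le_exp_of_nonneg hx]
  have h1 := mul_le_mul_of_nonneg_right hkey hc
  have h2 : 0 ≤ exp (-t * cos θ) * cos θ * (t * cos θ) := by positivity
  have hsc : t ^ 2 * sin θ ^ 2 = t ^ 2 - (t * cos θ) ^ 2 := by rw [sin_sq]; ring
  rw [hsc]
  linarith
end

section
/- Let k and j be integers with k ≥ j ≥ 1, let q = e^{2πi/k}, and let z ∈ ℂ with z^k ≠ 1. Then ∑_{s=1}^{k} q^{js}/(z − q^s) = k z^{j−1}/(z^k − 1). -/
/-!
If `w ^ k = 1`, the factorisation of `z ^ k - w ^ k` gives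
`1 / (z - w) = (∑_{m < k} z ^ m * w ^ (k - 1 - m)) / (z ^ k - 1)`. Applying this to `w = q ^ s` and
exchanging the two sums, the coefficient of `z ^ m` becomes the power sum
`∑ s, (q ^ (j + (k - 1 - m))) ^ s`. By orthogonality (`sum_pow_root`) this vanishes unless `k`
divides `j + (k - 1 - m)`, which for `0 ≤ m < k` and `1 ≤ j ≤ k` happens exactly when `m = j - 1`.
-/

open Complex Finset

/-- Orthogonality of the characters of `ℤ/kℤ`. -/
lemma sum_pow_root {q : ℂ} {k : ℕ} (hq : IsPrimitiveRoot q k) (n : ℕ) :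
    ∑ s ∈ Finset.Icc 1 k, (q ^ n) ^ s = if k ∣ n then (k : ℂ) else 0 := by
  split_ifs with h
  · simp [(hq.pow_eq_one_iff_dvd n).2 h]
  · have h1 : q ^ n ≠ 1 := fun e => h ((hq.pow_eq_one_iff_dvd n).1 e)
    have h2 : (q ^ n) ^ k = 1 := by rw [← pow_mul, mul_comm, pow_mul, hq.pow_eq_one, one_pow]
    rw [← Finset.Ico_add_one_right_eq_Icc, geom_sum_Ico h1 (by omega), pow_succ, h2]
    simp

/-- For `k ≥ j ≥ 1`, `q = e^{2πi/k}` and `z^k ≠ 1`,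
`∑_{s=1}^{k} q^{js}/(z − q^s) = k z^{j−1}/(z^k − 1)`. -/
theorem statement_10 (k j : ℕ) (hj : 1 ≤ j) (hjk : j ≤ k) (z : ℂ) (hz : z ^ k ≠ 1) :
    ∑ s ∈ Finset.Icc 1 k,
        (Complex.exp (2 * Real.pi * Complex.I / k)) ^ (j * s) /
          (z - (Complex.exp (2 * Real.pi * Complex.I / k)) ^ s)
      = k * z ^ (j - 1) / (z ^ k - 1) := by
  have hq := Complex.isPrimitiveRoot_exp k (by omega)
  generalize Complex.exp (2 * Real.pi * Complex.I / k) = q at hq ⊢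
  have hz' : z ^ k - 1 ≠ 0 := sub_ne_zero.2 hz
  have term : ∀ s ∈ Finset.Icc 1 k, q ^ (j * s) / (z - q ^ s) =
      (∑ m ∈ range k, z ^ m * (q ^ (j + (k - 1 - m))) ^ s) / (z ^ k - 1) := by
    intro s _
    have hw : (q ^ s) ^ k = 1 := by rw [← pow_mul, mul_comm, pow_mul, hq.pow_eq_one, one_pow]
    have hne : z - q ^ s ≠ 0 := fun e => hz (by rw [sub_eq_zero.1 e, hw])
    have hg := (Commute.all z (q ^ s)).geom_sum₂_mul k
    rw [hw] at hg
    have hs : ∑ m ∈ range k, z ^ m * (q ^ (j + (k - 1 - m))) ^ s =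
        q ^ (j * s) * ∑ m ∈ range k, z ^ m * (q ^ s) ^ (k - 1 - m) := by
      rw [mul_sum]
      refine sum_congr rfl fun m _ => ?_
      ring
    rw [div_eq_div_iff hne hz', hs, ← hg]
    ring
  rw [sum_congr rfl term, ← sum_div, sum_comm]
  congr 1
  simp_rw [← mul_sum, sum_pow_root hq]
  rw [sum_eq_single (j - 1)]
  · rw [if_pos, mul_comm]
    exact ⟨1, by omega⟩
  · intro m hm hmj
    rw [mem_range] at hm
    rw [if_neg, mul_zero]
    -- `0 < j + (k - 1 - m) < 2 * k`, so the only possible multiple of `k` is `k` itself.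
    rintro ⟨c, hc⟩
    have hc2 : c < 2 := by
      by_contra! h
      have := Nat.mul_le_mul_left k h
      omega
    interval_cases c <;> omega
  · intro h
    exact absurd (mem_range.2 (by omega)) h
end

section
/- Let M : [0,∞) → [2,∞) be a continuous increasing function and set R(t) = w_{M,log}(t). Then there exists a constant C > 0 such that M(R(t)) ≤ C t / log t for all t ≥ 2. -/
/-!
Let `t ≥ M_log(1)` and `s = M_log⁻¹(t)`, so `t = M(s) L` with `L = log(1 + M(s)) + log(1 + s)`.
Then `log t = log M(s) + log L ≤ 2 L`, hence `M(s) log t ≤ 2 M(s) L = 2 t`.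
For `2 ≤ t < M_log(1)` the left side is the constant `M(1)`, and `t / log t ≥ 1`.
That `M_log⁻¹(t)` is nonnegative follows from the surjectivity of
`M_log : [0,∞) → [M_log(0),∞)` (`exists_Mlog_eq`).
-/

open MeasureTheory Set Filter

/-- `M_log(s) = M(s)[log(1+M(s)) + log(1+s)]`. -/
noncomputable def Mlog (M : ℝ → ℝ) (s : ℝ) : ℝ :=
  M s * (Real.log (1 + M s) + Real.log (1 + s))

/-- The weight `w_{M,log}`: it equals `M_log^{−1}(t)` for `t ≥ M_log(1)` and `1` for
`0 ≤ t ≤ M_log(1)`; here `Minv` denotes the inverse function of `M_log`. -/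
noncomputable def wMlog (M Minv : ℝ → ℝ) (t : ℝ) : ℝ :=
  if Mlog M 1 ≤ t then Minv t else 1

/-- Intermediate value theorem for `M_log`, which is continuous and unbounded on `[0,∞)`. -/
lemma exists_Mlog_eq (M : ℝ → ℝ) (hM2 : ∀ s : ℝ, 0 ≤ s → 2 ≤ M s)
    (hMcont : ContinuousOn M (Ici 0)) (t : ℝ) (ht : Mlog M 0 ≤ t) (ht0 : 0 ≤ t) :
    ∃ s : ℝ, 0 ≤ s ∧ Mlog M s = t := by
  have hcont : ContinuousOn (Mlog M) (Icc 0 (Real.exp t)) := by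
    have hM : ContinuousOn M (Icc 0 (Real.exp t)) := hMcont.mono Icc_subset_Ici_self
    refine hM.mul (ContinuousOn.add ?_ ?_)
    · refine ContinuousOn.log (continuousOn_const.add hM) fun x hx => ?_
      have := hM2 x hx.1
      positivity
    · refine ContinuousOn.log (continuousOn_const.add continuousOn_id) fun x hx => ?_
      have := hx.1
      positivity
  have htop : t ≤ Mlog M (Real.exp t) := by
    have h2 := hM2 _ (Real.exp_pos t).le
    have h3 : 0 ≤ Real.log (1 + M (Real.exp t)) := Real.log_nonneg (by linarith)
    have h4 : t ≤ Real.log (1 + Real.exp t) := by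
      rw [Real.le_log_iff_exp_le (by positivity)]
      linarith
    unfold Mlog
    nlinarith
  obtain ⟨s, hs, rfl⟩ := intermediate_value_Icc (Real.exp_pos t).le hcont ⟨ht, htop⟩
  exact ⟨s, hs.1, rfl⟩

/-- The key estimate `log (M_log(s)) ≤ 2 (log(1 + M(s)) + log(1 + s))`, multiplied by `M(s)`;
it uses `log x ≤ x - 1` with `x = log(1 + M(s)) + log(1 + s)`. -/
lemma M_mul_log_Mlog_le (M : ℝ → ℝ) (s : ℝ) (hs : 0 ≤ s) (hM : 2 ≤ M s) :
    M s * Real.log (Mlog M s) ≤ 2 * Mlog M s := by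
  unfold Mlog
  set L := Real.log (1 + M s) + Real.log (1 + s) with hL
  have h1 : 0 < Real.log (1 + M s) := Real.log_pos (by linarith)
  have h2 : 0 ≤ Real.log (1 + s) := Real.log_nonneg (by linarith)
  have hLpos : 0 < L := by linarith
  have h3 : Real.log (M s) ≤ Real.log (1 + M s) :=
    Real.log_le_log (by linarith) (by linarith)
  have h4 := Real.log_le_sub_one_of_pos hLpos
  rw [Real.log_mul (by positivity) hLpos.ne']
  nlinarith

/-- For `R(t) = w_{M,log}(t)` one has `M(R(t)) ≤ C t / log t` for all `t ≥ 2`. -/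
theorem statement_18
    (M : ℝ → ℝ) (hM2 : ∀ s : ℝ, 0 ≤ s → 2 ≤ M s)
    (hMcont : ContinuousOn M (Ici 0)) (hMmono : MonotoneOn M (Ici 0))
    (Minv : ℝ → ℝ)
    (hMinv₁ : ∀ s : ℝ, 0 ≤ s → Minv (Mlog M s) = s)
    (hMinv₂ : ∀ t : ℝ, Mlog M 0 ≤ t → Mlog M (Minv t) = t) :
    ∃ C > (0:ℝ), ∀ t : ℝ, 2 ≤ t → M (wMlog M Minv t) ≤ C * t / Real.log t := by
  have hM1 := hM2 1 zero_le_one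
  refine ⟨M 1 + 2, by linarith, fun t ht => ?_⟩
  have hlog : 0 < Real.log t := Real.log_pos (by linarith)
  rw [le_div_iff₀ hlog]
  unfold wMlog
  split_ifs with h
  · have h01 : Mlog M 0 ≤ Mlog M 1 := by
      have hm : M 0 ≤ M 1 := hMmono (by simp) (by simp) zero_le_one
      have hM0 := hM2 0 le_rfl
      have hl : Real.log (1 + M 0) ≤ Real.log (1 + M 1) :=
        Real.log_le_log (by linarith) (by linarith)
      have hl0 : 0 ≤ Real.log (1 + M 0) := Real.log_nonneg (by linarith)
      have hl2 : 0 ≤ Real.log (1 + (1 : ℝ)) := Real.log_nonneg (by norm_num)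
      unfold Mlog
      rw [add_zero, Real.log_one]
      exact mul_le_mul hm (by linarith) (by linarith) (by linarith)
    obtain ⟨s, hs, rfl⟩ := exists_Mlog_eq M hM2 hMcont t (h01.trans h) (by linarith)
    rw [hMinv₁ s hs]
    have := M_mul_log_Mlog_le M s hs (hM2 s hs)
    nlinarith
  · have := Real.log_le_sub_one_of_pos (show 0 < t by linarith)
    nlinarith
end
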